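/- Let K be a field of characteristic zero, let A be an associative unital K-algebra which is a division ring with center equal to K and of dimension 9 over K, and let G be a finite group of order a power of 3 admitting an injective group homomorphism into the group Aˣ/Kˣ. Then G is isomorphic to a subgroup of μ_3 × μ_3; in particular, the order of G divides 9 and G is abelian of exponent dividing 3. -/

import Mathlib

/-- The central subgroup `Kˣ ⊆ Aˣ`: the units of `A` lying in the image of the structure map
`K → A`. -/
def centralUnits (K A : Type*) [Field K] [DivisionRing A] [Algebra K A] : Subgroup Aˣ :=
  (Units.map (algebraMap K A).toMonoidHom).range

instance centralUnits_normal (K A : Type*) [Field K] [DivisionRing A] [Algebra K A] :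
    (centralUnits K A).Normal := by
  constructor
  intro x hx g
  obtain ⟨k, hk⟩ := hx
  have hx' : (x : A) = algebraMap K A (k : K) := by rw [← hk]; rfl
  have h1 : g * x = x * g := by
    apply Units.ext
    rw [Units.val_mul, Units.val_mul, hx']
    exact (Algebra.commutes (k : K) (g : A)).symm
  have h2 : g * x * g⁻¹ = x := by rw [h1, mul_inv_cancel_right]
  rw [h2]
  exact ⟨k, hk⟩

/-!
Let `p` be an odd prime, `K` a field with `p ≠ 0` in `K`, and `A` a central division algebra of
dimension `p²`. The centralizer of any `y ∈ A \ K` is the field `K(y)`, of degree `p` over `K`.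

* If `x ∈ A` has `x ^ p² = a ∈ K` but `x ^ p ∉ K`, then `X ^ p - a` is the minimal polynomial of
  `x ^ p`, so `a` is not a `p`-th power in `K`; as `p` is odd, `X ^ p² - a` is then irreducible,
  which is impossible for an element of degree at most `p`. So `p`-power torsion in `Aˣ / Kˣ` has
  exponent dividing `p`.
* If `y ∉ K` commutes with `w` and both `p`-th powers lie in `K`, then `w ∈ K y ^ i` for some `i`:
  otherwise every `w y ^ i` has trace zero, hence so has every element of `w K(y) = K(y)`, whereas
  the trace of `1` is `p ≠ 0`.

Let `z ≠ 1` be a central element of a finite `p`-group `G ⊆ Aˣ / Kˣ`. Lifts of elements of `G`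
conjugate a lift of `z` into its multiples by `p`-th roots of unity of `K`, and two elements of `G`
giving the same root of unity differ by a power of `z`. Hence `|G| ≤ p²`, and a group of exponent
`p` and order at most `p²` embeds into `(ℤ/p)²`.
-/

open Polynomial Module

section FieldExtension

variable {K L : Type*} [Field K] [Field L] [Algebra K L] {p : ℕ}

theorem minpoly_eq_X_pow_sub_C (hp : p.Prime) (hL : finrank K L = p) {y : L}
    (hy : y ∉ (⊥ : Subalgebra K L)) {a : K} (ha : y ^ p = algebraMap K L a) :
    minpoly K y = X ^ p - C a := by
  have : FiniteDimensional K L := .of_finrank_pos (hL ▸ hp.pos)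
  have hint : IsIntegral K y := .of_finite K y
  have hdeg : (minpoly K y).natDegree = p :=
    (hp.eq_one_or_self_of_dvd _ (hL ▸ minpoly.degree_dvd hint)).resolve_left fun h =>
      hy (minpoly.natDegree_eq_one_iff.1 h)
  refine (eq_of_monic_of_dvd_of_natDegree_le (minpoly.monic hint) (monic_X_pow_sub_C a hp.ne_zero)
    (minpoly.dvd K y ?_) ?_).symm
  · simp [ha]
  · rw [natDegree_X_pow_sub_C, hdeg]

theorem trace_eq_zero_of_pow_mem_bot (hp : p.Prime) (hL : finrank K L = p) {y : L}
    (hy : y ∉ (⊥ : Subalgebra K L)) (hyp : y ^ p ∈ (⊥ : Subalgebra K L)) :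
    Algebra.trace K L y = 0 := by
  have : FiniteDimensional K L := .of_finrank_pos (hL ▸ hp.pos)
  obtain ⟨a, ha⟩ := Algebra.mem_bot.1 hyp
  have hnext : (X ^ p - C a).nextCoeff = 0 := by
    have h0 : p - 1 ≠ 0 := Nat.sub_ne_zero_of_lt hp.one_lt
    have h1 : p - 1 ≠ p := Nat.sub_one_ne_self hp.ne_zero
    rw [nextCoeff_of_natDegree_pos (by simpa using hp.pos), natDegree_X_pow_sub_C, coeff_sub,
      coeff_X_pow, coeff_C, if_neg h1, if_neg h0, sub_zero]
  rw [trace_eq_finrank_mul_minpoly_nextCoeff, minpoly_eq_X_pow_sub_C hp hL hy ha.symm, hnext,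
    neg_zero, mul_zero]

theorem pow_mem_bot_of_finrank_eq_prime (hp : p.Prime) (hp2 : p ≠ 2) (hL : finrank K L = p)
    {x : L} (hx : x ^ p ^ 2 ∈ (⊥ : Subalgebra K L)) : x ^ p ∈ (⊥ : Subalgebra K L) := by
  by_contra hxp
  have : FiniteDimensional K L := .of_finrank_pos (hL ▸ hp.pos)
  obtain ⟨a, ha⟩ := Algebra.mem_bot.1 hx
  have hirr : Irreducible (X ^ p - C a) := by
    rw [← minpoly_eq_X_pow_sub_C hp hL hxp (by rw [ha, sq, pow_mul])]
    exact minpoly.irreducible (.of_finite K _)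
  have hirr_sq : Irreducible (X ^ p ^ 2 - C a) :=
    X_pow_sub_C_irreducible_of_prime_pow hp hp2 2 fun b =>
      pow_ne_of_irreducible_X_pow_sub_C hirr dvd_rfl hp.ne_one b
  have hdeg : (minpoly K x).natDegree = p ^ 2 := by
    rw [← minpoly.eq_of_irreducible_of_monic hirr_sq (by simp [ha])
      (monic_X_pow_sub_C a (pow_ne_zero 2 hp.ne_zero)), natDegree_X_pow_sub_C]
  have hle : p ^ 2 ≤ p := hdeg ▸ hL ▸ minpoly.natDegree_le x
  exact hle.not_gt (lt_self_pow₀ hp.one_lt one_lt_two)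

theorem exists_eq_smul_zpow_of_finrank_eq_prime (hp : p.Prime) (hpK : (p : K) ≠ 0)
    (hL : finrank K L = p) {y w : L} (hy : y ∉ (⊥ : Subalgebra K L))
    (hyp : y ^ p ∈ (⊥ : Subalgebra K L)) (hwp : w ^ p ∈ (⊥ : Subalgebra K L)) :
    ∃ (c : K) (i : ℤ), w = c • y ^ i := by
  have hy0 : y ≠ 0 := fun h => hy (h ▸ zero_mem _)
  rcases eq_or_ne w 0 with rfl | hw0
  · exact ⟨0, 0, by simp⟩
  by_contra! hne
  have htrace_pow (i : ℕ) : Algebra.trace K L (w * y ^ i) = 0 := by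
    refine trace_eq_zero_of_pow_mem_bot hp hL (fun hmem => ?_) ?_
    · obtain ⟨c, hc⟩ := Algebra.mem_bot.1 hmem
      refine hne c (-i) ?_
      rw [Algebra.smul_def, hc, zpow_neg, zpow_natCast, mul_inv_cancel_right₀ (pow_ne_zero i hy0)]
    · rw [mul_pow, pow_right_comm]
      exact mul_mem hwp (pow_mem hyp i)
  have hadjoin : Algebra.adjoin K {y} = ⊤ := by
    have := Subalgebra.isSimpleOrder_of_finrank_prime K L (hL ▸ hp)
    exact (eq_bot_or_eq_top _).resolve_left fun h =>
      hy (h ▸ Algebra.self_mem_adjoin_singleton K y)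
  have htrace : Algebra.trace K L ∘ₗ LinearMap.mulLeft K w = 0 := by
    rw [← LinearMap.ker_eq_top, ← top_le_iff, ← Algebra.top_toSubmodule, ← hadjoin,
      Algebra.adjoin_eq_span, Submodule.span_le]
    intro v hv
    obtain ⟨i, rfl⟩ := Submonoid.mem_closure_singleton.1 hv
    exact htrace_pow i
  apply hpK
  calc (p : K) = Algebra.trace K L (w * w⁻¹) := by
        rw [mul_inv_cancel₀ hw0, ← map_one (algebraMap K L), Algebra.trace_algebraMap, hL,
          nsmul_one]
    _ = 0 := LinearMap.congr_fun htrace w⁻¹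

end FieldExtension

section DivisionAlgebra

variable {K A : Type*} [Field K] [DivisionRing A] [Algebra K A] {p : ℕ}

theorem finrank_subalgebra_eq_of_ne_bot_of_ne_top (hp : p.Prime) (hA : finrank K A = p ^ 2)
    {D : Subalgebra K A} (hbot : D ≠ ⊥) (htop : D ≠ ⊤) : finrank K D = p := by
  have : FiniteDimensional K A := .of_finrank_pos (hA ▸ pow_pos hp.pos 2)
  let := divisionRingOfFiniteDimensional K D
  have hdvd : finrank K D ∣ p ^ 2 := hA ▸ ⟨_, (finrank_mul_finrank K D A).symm⟩
  obtain ⟨i, hi, hDi⟩ := (Nat.dvd_prime_pow hp).1 hdvd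
  interval_cases i
  · exact absurd (Subalgebra.eq_bot_of_finrank_one hDi) hbot
  · rw [hDi, pow_one]
  · exact absurd (Algebra.toSubmodule_eq_top.1
      (Submodule.eq_top_of_finrank_eq (hDi.trans hA.symm))) htop

theorem subalgebra_coe_mem_bot_iff {D : Subalgebra K A} {d : D} :
    (d : A) ∈ (⊥ : Subalgebra K A) ↔ d ∈ (⊥ : Subalgebra K D) := by
  simp [Algebra.mem_bot, Subtype.ext_iff]

theorem adjoin_singleton_le_centralizer (y : A) :
    Algebra.adjoin K {y} ≤ Subalgebra.centralizer K {y} :=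
  Algebra.adjoin_le <| Set.singleton_subset_iff.2 <| (Subalgebra.mem_centralizer_iff K).2 <| by simp

theorem adjoin_singleton_ne_bot {y : A} (hy : y ∉ (⊥ : Subalgebra K A)) :
    Algebra.adjoin K {y} ≠ ⊥ :=
  fun h => hy (h ▸ Algebra.self_mem_adjoin_singleton K y)

variable [Algebra.IsCentral K A]

theorem centralizer_singleton_ne_top {y : A} (hy : y ∉ (⊥ : Subalgebra K A)) :
    Subalgebra.centralizer K {y} ≠ ⊤ := by
  rwa [Ne, Subalgebra.centralizer_eq_top_iff_subset, Set.singleton_subset_iff, SetLike.mem_coe,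
    Algebra.IsCentral.center_eq_bot]

theorem finrank_adjoin_singleton (hp : p.Prime) (hA : finrank K A = p ^ 2) {y : A}
    (hy : y ∉ (⊥ : Subalgebra K A)) : finrank K (Algebra.adjoin K {y}) = p :=
  finrank_subalgebra_eq_of_ne_bot_of_ne_top hp hA (adjoin_singleton_ne_bot hy)
    (ne_top_of_le_ne_top (centralizer_singleton_ne_top hy) (adjoin_singleton_le_centralizer y))

theorem adjoin_singleton_eq_centralizer (hp : p.Prime) (hA : finrank K A = p ^ 2) {y : A}
    (hy : y ∉ (⊥ : Subalgebra K A)) :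
    Algebra.adjoin K {y} = Subalgebra.centralizer K {y} := by
  have : FiniteDimensional K A := .of_finrank_pos (hA ▸ pow_pos hp.pos 2)
  have hle : Algebra.adjoin K {y} ≤ Subalgebra.centralizer K {y} :=
    adjoin_singleton_le_centralizer y
  have hfinrank : finrank K (Subalgebra.centralizer K {y}) = p :=
    finrank_subalgebra_eq_of_ne_bot_of_ne_top hp hA
      (ne_bot_of_le_ne_bot (adjoin_singleton_ne_bot hy) hle) (centralizer_singleton_ne_top hy)
  exact Subalgebra.eq_of_le_of_finrank_eq hle
    ((finrank_adjoin_singleton hp hA hy).trans hfinrank.symm)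

open scoped IsMulCommutative in
theorem pow_mem_bot_of_finrank_eq_prime_sq (hp : p.Prime) (hp2 : p ≠ 2)
    (hA : finrank K A = p ^ 2) {x : A} (hx : x ^ p ^ 2 ∈ (⊥ : Subalgebra K A)) :
    x ^ p ∈ (⊥ : Subalgebra K A) := by
  by_cases hxbot : x ∈ (⊥ : Subalgebra K A)
  · exact pow_mem hxbot p
  have : FiniteDimensional K A := .of_finrank_pos (hA ▸ pow_pos hp.pos 2)
  let := fieldOfFiniteDimensional K (Algebra.adjoin K {x})
  let x' : Algebra.adjoin K {x} := ⟨x, Algebra.self_mem_adjoin_singleton K x⟩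
  have hx' : x' ^ p ^ 2 ∈ (⊥ : Subalgebra K (Algebra.adjoin K {x})) :=
    subalgebra_coe_mem_bot_iff.1 hx
  exact subalgebra_coe_mem_bot_iff.2 <| pow_mem_bot_of_finrank_eq_prime hp hp2
    (finrank_adjoin_singleton hp hA hxbot) hx'

open scoped IsMulCommutative in
theorem exists_eq_smul_zpow_of_commute (hp : p.Prime) (hpK : (p : K) ≠ 0)
    (hA : finrank K A = p ^ 2) {y w : A} (hy : y ∉ (⊥ : Subalgebra K A))
    (hyp : y ^ p ∈ (⊥ : Subalgebra K A)) (hwp : w ^ p ∈ (⊥ : Subalgebra K A))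
    (hyw : Commute y w) : ∃ (c : K) (i : ℤ), w = c • y ^ i := by
  have : FiniteDimensional K A := .of_finrank_pos (hA ▸ pow_pos hp.pos 2)
  have hw : w ∈ Algebra.adjoin K {y} := by
    rw [adjoin_singleton_eq_centralizer hp hA hy, Subalgebra.mem_centralizer_iff]
    simpa using hyw.eq
  let := fieldOfFiniteDimensional K (Algebra.adjoin K {y})
  let y' : Algebra.adjoin K {y} := ⟨y, Algebra.self_mem_adjoin_singleton K y⟩
  let w' : Algebra.adjoin K {y} := ⟨w, hw⟩
  obtain ⟨c, i, hw'⟩ := exists_eq_smul_zpow_of_finrank_eq_prime (y := y') (w := w') hp hpK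
    (finrank_adjoin_singleton hp hA hy) (mt subalgebra_coe_mem_bot_iff.2 hy)
    (subalgebra_coe_mem_bot_iff.1 hyp) (subalgebra_coe_mem_bot_iff.1 hwp)
  refine ⟨c, i, ?_⟩
  have hval := congrArg (Algebra.adjoin K {y}).val hw'
  rwa [map_smul, map_zpow₀] at hval

end DivisionAlgebra

section PGroup

variable {G : Type*} {p : ℕ}

theorem pow_eq_one_of_pow_pow_eq_one [Monoid G] (h : ∀ g : G, g ^ p ^ 2 = 1 → g ^ p = 1) {g : G}
    {k : ℕ} (hg : g ^ p ^ k = 1) : g ^ p = 1 := by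
  induction k with
  | zero => rw [show g = 1 by simpa using hg, one_pow]
  | succ k ih =>
    rcases k with _ | k
    · simpa using hg
    · refine ih ?_
      rw [pow_succ, pow_mul]
      exact h _ (by rw [← pow_mul, ← pow_add, hg])

theorem isMulCommutative_of_card_le_prime_sq [Group G] [Finite G] (hp : p.Prime) (hG : IsPGroup p G)
    (hcard : Nat.card G ≤ p ^ 2) : IsMulCommutative G := by
  have : Fact p.Prime := ⟨hp⟩
  obtain ⟨k, hk⟩ := hG.exists_card_eq
  have hk2 : k ≤ 2 := (Nat.pow_le_pow_iff_right hp.one_lt).1 (hk ▸ hcard)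
  interval_cases k
  · have := (Nat.card_eq_one_iff_unique.1 hk).1
    exact .of_comm fun _ _ => Subsingleton.elim _ _
  · have := isCyclic_of_prime_card (hk.trans (pow_one p))
    infer_instance
  · exact IsPGroup.isMulCommutative_of_card_eq_prime_sq hk

theorem exists_injective_hom_of_card_le [CommGroup G] [Finite G] (hp : p.Prime)
    (hexp : ∀ g : G, g ^ p = 1) {V : Type*} [AddCommGroup V] [Module (ZMod p) V] [Finite V]
    (hcard : Nat.card G ≤ Nat.card V) :
    ∃ h : G →* Multiplicative V, Function.Injective h := by
  have : Fact p.Prime := ⟨hp⟩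
  -- `have` rather than `let`: instance search gets stuck when it can unfold this one.
  have : Module (ZMod p) (Additive G) :=
    AddCommGroup.zmodModule fun x => congrArg Additive.ofMul (hexp x.toMul)
  have hfinrank : finrank (ZMod p) (Additive G) ≤ finrank (ZMod p) V := by
    rw [← Nat.pow_le_pow_iff_right hp.one_lt, FiniteField.pow_finrank_eq_natCard,
      FiniteField.pow_finrank_eq_natCard]
    exact hcard
  obtain ⟨φ, hφ⟩ := finrank_le_iff_exists_linearMap.1 hfinrank
  exact ⟨AddMonoidHom.toMultiplicativeRight φ.toAddMonoidHom, hφ⟩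

end PGroup

section CentralUnits

variable {K A : Type*} [Field K] [DivisionRing A] [Algebra K A] {p n : ℕ}

theorem mem_centralUnits_iff {u : Aˣ} :
    u ∈ centralUnits K A ↔ (u : A) ∈ (⊥ : Subalgebra K A) := by
  rw [Algebra.mem_bot]
  constructor
  · rintro ⟨k, rfl⟩
    exact ⟨k, rfl⟩
  · rintro ⟨k, hk⟩
    refine ⟨Units.mk0 k ?_, Units.ext hk⟩
    rintro rfl
    exact u.ne_zero (by rw [← hk, map_zero])

theorem centralUnits_le_center : centralUnits K A ≤ Subgroup.center Aˣ := by
  rintro _ ⟨k, rfl⟩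
  exact Subgroup.mem_center_iff.2 fun u => Units.ext (Algebra.commutes (k : K) (u : A)).symm

theorem mk_centralUnits_eq_one_iff {u : Aˣ} :
    (u : Aˣ ⧸ centralUnits K A) = 1 ↔ (u : A) ∈ (⊥ : Subalgebra K A) := by
  rw [QuotientGroup.eq_one_iff, mem_centralUnits_iff]

theorem mk_centralUnits_pow_eq_one_iff {u : Aˣ} :
    (u : Aˣ ⧸ centralUnits K A) ^ n = 1 ↔ (u : A) ^ n ∈ (⊥ : Subalgebra K A) := by
  rw [← QuotientGroup.mk_pow, mk_centralUnits_eq_one_iff, Units.val_pow_eq_pow_val]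

theorem exists_rootsOfUnity_semiconjBy {u x : Aˣ}
    (hux : Commute (u : Aˣ ⧸ centralUnits K A) x) (hx : (x : Aˣ ⧸ centralUnits K A) ^ n = 1) :
    ∃ c ∈ rootsOfUnity n K, SemiconjBy u x (Units.map (algebraMap K A).toMonoidHom c * x) := by
  have hmem : u * x * u⁻¹ * x⁻¹ ∈ centralUnits K A := by
    rw [← QuotientGroup.eq_one_iff]
    simp [hux.eq]
  obtain ⟨c, hc⟩ := hmem
  set ι : Kˣ →* Aˣ := Units.map (algebraMap K A).toMonoidHom
  have hconj : SemiconjBy u x (ι c * x) := by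
    rw [hc, inv_mul_cancel_right]
    exact SemiconjBy.conj_mk u x
  refine ⟨c, ?_, hconj⟩
  have hcx : Commute (ι c) x :=
    (Subgroup.mem_center_iff.1 (centralUnits_le_center ⟨c, rfl⟩) x).symm
  have hxn : Commute u (x ^ n) := by
    rw [← QuotientGroup.mk_pow, QuotientGroup.eq_one_iff] at hx
    exact Subgroup.mem_center_iff.1 (centralUnits_le_center hx) u
  have hpow : ι c ^ n * x ^ n = x ^ n := by
    rw [← hcx.mul_pow]
    exact mul_right_cancel ((hconj.pow_right n).eq.symm.trans hxn.eq)
  rw [mem_rootsOfUnity]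
  apply Units.map_injective (algebraMap K A).injective
  rw [map_one]
  exact (map_pow ι c n).trans (mul_eq_right.1 hpow)

variable [Algebra.IsCentral K A]

theorem pow_eq_one_of_pow_sq_eq_one (hp : p.Prime) (hp2 : p ≠ 2) (hA : finrank K A = p ^ 2)
    {q : Aˣ ⧸ centralUnits K A} (hq : q ^ p ^ 2 = 1) : q ^ p = 1 := by
  induction q using QuotientGroup.induction_on with | H u
  rw [mk_centralUnits_pow_eq_one_iff] at hq ⊢
  exact pow_mem_bot_of_finrank_eq_prime_sq hp hp2 hA hq

theorem mk_mem_zpowers_of_commute (hp : p.Prime) (hpK : (p : K) ≠ 0) (hA : finrank K A = p ^ 2)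
    {x u : Aˣ} (hx : (x : Aˣ ⧸ centralUnits K A) ≠ 1) (hxp : (x : Aˣ ⧸ centralUnits K A) ^ p = 1)
    (hup : (u : Aˣ ⧸ centralUnits K A) ^ p = 1) (hxu : Commute x u) :
    (u : Aˣ ⧸ centralUnits K A) ∈ Subgroup.zpowers (x : Aˣ ⧸ centralUnits K A) := by
  rw [Ne, mk_centralUnits_eq_one_iff] at hx
  rw [mk_centralUnits_pow_eq_one_iff] at hxp hup
  obtain ⟨c, i, hci⟩ := exists_eq_smul_zpow_of_commute hp hpK hA hx hxp hup hxu.units_val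
  refine Subgroup.mem_zpowers_iff.2 ⟨i, ?_⟩
  rw [← QuotientGroup.mk_zpow, QuotientGroup.eq, mem_centralUnits_iff, Algebra.mem_bot]
  refine ⟨c, ?_⟩
  rw [Units.val_mul, hci, mul_smul_comm, ← Units.val_zpow_eq_zpow_val, Units.inv_mul,
    Algebra.algebraMap_eq_smul_one]

theorem index_zpowers_le_of_mem_center (hp : p.Prime) (hpK : (p : K) ≠ 0)
    (hA : finrank K A = p ^ 2) {G : Type*} [Group G] {f : G →* Aˣ ⧸ centralUnits K A}
    (hf : Function.Injective f) (hexp : ∀ g : G, g ^ p = 1) {z : G} (hz : z ∈ Subgroup.center G)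
    (hz1 : z ≠ 1) : (Subgroup.zpowers z).index ≤ p := by
  have : NeZero p := ⟨hp.ne_zero⟩
  choose u hu using fun g => QuotientGroup.mk_surjective (f g)
  have hfexp (g : G) : f g ^ p = 1 := by rw [← map_pow, hexp, map_one]
  have hconj (g : G) : ∃ c ∈ rootsOfUnity p K,
      SemiconjBy (u g) (u z) (Units.map (algebraMap K A).toMonoidHom c * u z) := by
    have hgz : Commute g z := Subgroup.mem_center_iff.1 hz g
    apply exists_rootsOfUnity_semiconjBy
    · rw [hu, hu]
      exact hgz.map f
    · rw [hu, hfexp]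
  choose c hc hconj using hconj
  have hfiber {g h : G} (hgh : c g = c h) : g⁻¹ * h ∈ Subgroup.zpowers z := by
    have hcomm : Commute ((u g)⁻¹ * u h) (u z) :=
      (hgh ▸ hconj g).inv_symm_left.mul_left (hconj h)
    have hmk : (((u g)⁻¹ * u h : Aˣ) : Aˣ ⧸ centralUnits K A) = f (g⁻¹ * h) := by
      simp [hu]
    have hmem := mk_mem_zpowers_of_commute hp hpK hA (by rwa [hu, map_ne_one_iff f hf])
      (by rw [hu, hfexp]) (by rw [hmk, hfexp]) hcomm.symm
    rwa [hmk, hu, ← MonoidHom.map_zpowers, Subgroup.mem_map_iff_mem hf] at hmem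
  calc (Subgroup.zpowers z).index ≤ Nat.card (rootsOfUnity p K) :=
        Nat.card_le_card_of_injective (fun q => ⟨c q.out, hc q.out⟩) fun q r hqr => by
          rw [← q.out_eq', ← r.out_eq']
          exact QuotientGroup.eq.2 (hfiber (congrArg Subtype.val hqr))
    _ ≤ p := card_rootsOfUnity K p

theorem pow_eq_one_of_isPGroup (hp : p.Prime) (hp2 : p ≠ 2) (hA : finrank K A = p ^ 2)
    {G : Type*} [Group G] (hG : IsPGroup p G) {f : G →* Aˣ ⧸ centralUnits K A}
    (hf : Function.Injective f) (g : G) : g ^ p = 1 := by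
  obtain ⟨k, hk⟩ := hG.exists_pow_pow_eq_one g
  refine pow_eq_one_of_pow_pow_eq_one (fun g hg => hf ?_) hk
  rw [map_pow, map_one]
  exact pow_eq_one_of_pow_sq_eq_one hp hp2 hA (by rw [← map_pow, hg, map_one])

theorem card_le_sq_of_isPGroup (hp : p.Prime) (hp2 : p ≠ 2) (hpK : (p : K) ≠ 0)
    (hA : finrank K A = p ^ 2) {G : Type*} [Group G] [Finite G] (hG : IsPGroup p G)
    {f : G →* Aˣ ⧸ centralUnits K A} (hf : Function.Injective f) : Nat.card G ≤ p ^ 2 := by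
  have : Fact p.Prime := ⟨hp⟩
  have hexp := pow_eq_one_of_isPGroup hp hp2 hA hG hf
  rcases subsingleton_or_nontrivial G with _ | _
  · simpa using Nat.one_le_pow 2 p hp.pos
  have := hG.center_nontrivial
  obtain ⟨z, hz1⟩ := exists_ne (1 : Subgroup.center G)
  calc Nat.card G = orderOf (z : G) * (Subgroup.zpowers (z : G)).index := by
        rw [← Nat.card_zpowers, Subgroup.card_mul_index]
    _ ≤ p * p := Nat.mul_le_mul (orderOf_le_of_pow_eq_one hp.pos (hexp z))
        (index_zpowers_le_of_mem_center hp hpK hA hf hexp z.2 (mt OneMemClass.coe_eq_one.1 hz1))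
    _ = p ^ 2 := (sq p).symm

end CentralUnits

open scoped IsMulCommutative in
theorem stmt_15_general {p : ℕ} (hp : p.Prime) (hp2 : p ≠ 2) {K A : Type*} [Field K]
    (hpK : (p : K) ≠ 0) [DivisionRing A] [Algebra K A] [Algebra.IsCentral K A]
    (hA : finrank K A = p ^ 2) {G : Type*} [Group G] [Finite G] (hG : IsPGroup p G)
    (f : G →* Aˣ ⧸ centralUnits K A) (hf : Function.Injective f) :
    ∃ h : G →* Multiplicative (ZMod p × ZMod p), Function.Injective h := by
  have : NeZero p := ⟨hp.ne_zero⟩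
  have hcard : Nat.card G ≤ p ^ 2 := card_le_sq_of_isPGroup hp hp2 hpK hA hG hf
  have := isMulCommutative_of_card_le_prime_sq hp hG hcard
  exact exists_injective_hom_of_card_le hp (pow_eq_one_of_isPGroup hp hp2 hA hG hf)
    (hcard.trans_eq (by rw [Nat.card_prod, Nat.card_zmod, sq]))

/-- Let `K` be a field of characteristic zero, `A` a central division algebra of dimension `9`
over `K`, and `G` a finite group of order a power of `3` admitting an injective group
homomorphism into `Aˣ/Kˣ` (the automorphism group of the non-trivial Severi–Brauer surface
corresponding to `A`). Then `G` is isomorphic to a subgroup of `μ₃ × μ₃`. -/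
theorem stmt_15 (K : Type) [Field K] [CharZero K]
    (A : Type) [DivisionRing A] [Algebra K A]
    (hcenter : Subalgebra.center K A = ⊥) (hrank : Module.finrank K A = 9)
    (G : Type) [Group G] [Finite G] (hG : ∃ k : ℕ, Nat.card G = 3 ^ k)
    (f : G →* Aˣ ⧸ centralUnits K A) (hf : Function.Injective f) :
    ∃ h : G →* Multiplicative (ZMod 3 × ZMod 3), Function.Injective h := by
  have : Algebra.IsCentral K A := ⟨hcenter.le⟩
  exact stmt_15_general Nat.prime_three (by norm_num) (by norm_num) hrank
    (IsPGroup.iff_card.2 hG) f hf
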